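/- arXiv:math/0505052 — 4 statements merged into one kernel-verified Lean document; each statement's English description precedes it below -/
import Mathlib

section
/- Let p be an odd prime. A polynomial f in (ZMod p)[ξ, η] satisfies g·f = f for every matrix g in SL₂(ZMod p) if and only if f lies in the (ZMod p)-subalgebra generated by q and r. In other words, the ring of SL₂(ZMod p)-invariants of (ZMod p)[ξ, η] is exactly Algebra.adjoin (ZMod p) {q, r}. -/
open MvPolynomial

namespace Dickson

variable {p : ℕ} [hpf : Fact p.Prime]

/-- two variable polynomials -/
abbrev R (p : ℕ) := MvPolynomial (Fin 2) (ZMod p)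

theorem dvd_sub_aeval (d : R p) (v : Fin 2 → R p) (hv : ∀ i, d ∣ X i - v i) (f : R p) :
    d ∣ f - aeval v f := by
  induction f using MvPolynomial.induction_on with
  | C a => simp [algebraMap_eq]
  | add f g hf hg =>
    rw [map_add, add_sub_add_comm]; exact dvd_add hf hg
  | mul_X f i hf =>
    rw [map_mul, aeval_X]
    have : f * X i - aeval v f * v i = (f - aeval v f) * X i + aeval v f * (X i - v i) := by ring
    rw [this]
    exact dvd_add (hf.mul_right _) ((hv i).mul_left _)

theorem aeval_comp {A : Type*} [CommRing A] [Algebra (ZMod p) A] (v : Fin 2 → R p) (w : Fin 2 → A)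
    (f : R p) : aeval w (aeval v f) = aeval (fun i => aeval w (v i)) f := by
  have : (aeval w).comp (aeval v) = aeval (fun i => aeval w (v i)) := by
    ext i; simp
  rw [← this]; rfl

theorem aeval_congr' {A : Type*} [CommRing A] [Algebra (ZMod p) A] {v w : Fin 2 → A}
    (h0 : v 0 = w 0) (h1 : v 1 = w 1) (f : R p) : aeval v f = aeval w f := by
  have : v = w := by ext i; fin_cases i <;> assumption
  rw [this]

theorem X1_ne : (X 1 : R p) ≠ 0 := X_ne_zero _

theorem prod_dvd (s : Finset (ZMod p)) (h : R p)
    (hs : ∀ c ∈ s, aeval (![C c * X 1, X 1] : Fin 2 → R p) h = 0) :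
    ∏ c ∈ s, (X 0 - C c * X 1 : R p) ∣ h := by
  classical
  induction s using Finset.induction_on with
  | empty => simp
  | insert a s ha ih =>
    obtain ⟨k, hk⟩ := ih (fun c hc => hs c (Finset.mem_insert_of_mem hc))
    rw [Finset.prod_insert ha, mul_comm]
    have h1 := hs a (Finset.mem_insert_self _ _)
    rw [hk, map_mul, map_prod] at h1
    have h2 : (aeval (![C a * X 1, X 1] : Fin 2 → R p)) k = 0 := by
      rcases mul_eq_zero.1 h1 with h | h
      · exfalso
        obtain ⟨c, hc, h⟩ := Finset.prod_eq_zero_iff.1 h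
        simp only [map_sub, map_mul, aeval_X, aeval_C, algebraMap_eq, Matrix.cons_val_zero,
          Matrix.cons_val_one, ← sub_mul] at h
        rw [← C_sub] at h
        rcases mul_eq_zero.1 h with h | h
        · rw [C_eq_zero, sub_eq_zero] at h
          exact ha (h ▸ hc)
        · exact X1_ne h
      · exact h
    have h3 := dvd_sub_aeval (X 0 - C a * X 1) (![C a * X 1, X 1] : Fin 2 → R p)
      (by intro i; fin_cases i <;> simp) k
    rw [h2, sub_zero] at h3
    rw [hk]
    exact mul_dvd_mul_left _ h3

theorem prod_field {K : Type*} [Field K] [Algebra (ZMod p) K] (x y : K) (hy : y ≠ 0) :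
    ∏ c : ZMod p, (x - algebraMap _ K c * y) = x ^ p - x * y ^ (p - 1) := by
  have h2 : ∏ c : ZMod p, (Polynomial.X - Polynomial.C c) = Polynomial.X ^ p - Polynomial.X := by
    have hr := FiniteField.roots_X_pow_card_sub_X (ZMod p)
    rw [ZMod.card] at hr
    have hm : (Polynomial.X ^ p - Polynomial.X : Polynomial (ZMod p)).Monic :=
      Polynomial.monic_X_pow_sub (by
        rw [Polynomial.degree_X]; exact_mod_cast hpf.out.one_lt)
    have h := Polynomial.prod_multiset_X_sub_C_of_monic_of_roots_card_eq hm (by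
      rw [hr, FiniteField.X_pow_card_sub_X_natDegree_eq (ZMod p) hpf.out.one_lt]
      simp [ZMod.card])
    rw [hr] at h
    exact h
  have h3 := congrArg (Polynomial.aeval (x / y)) h2
  simp only [map_prod, map_sub, map_pow, Polynomial.aeval_X, Polynomial.aeval_C] at h3
  have h4 : ∏ c : ZMod p, (x - algebraMap _ K c * y)
      = ∏ c : ZMod p, ((x / y - algebraMap _ K c) * y) := by
    apply Finset.prod_congr rfl
    intro c _
    field_simp
  rw [h4, Finset.prod_mul_distrib, h3, Finset.prod_const, Finset.card_univ, ZMod.card]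
  obtain ⟨n, hn⟩ : ∃ n, p = n + 1 := ⟨p - 1, by have := hpf.out.pos; omega⟩
  have : p - 1 = n := by omega
  rw [this, sub_mul, div_pow, div_mul_cancel₀ _ (pow_ne_zero _ hy), hn, pow_succ y n]
  field_simp

/-- the orbit product -/
noncomputable def N (p : ℕ) : R p := X 0 ^ p - X 0 * X 1 ^ (p - 1)

theorem N_eq : ∏ c : ZMod p, (X 0 - C c * X 1 : R p) = N p := by
  have hinj := IsFractionRing.injective (R p) (FractionRing (R p))
  apply hinj
  have := prod_field (p := p) (algebraMap (R p) (FractionRing (R p)) (X 0))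
    (algebraMap (R p) (FractionRing (R p)) (X 1))
    (by rw [Ne, map_eq_zero_iff _ hinj]; exact X1_ne)
  simp only [N, map_prod, map_sub, map_mul, map_pow]
  rw [← this]
  apply Finset.prod_congr rfl
  intro c _
  rw [IsScalarTower.algebraMap_apply (ZMod p) (R p) (FractionRing (R p))]
  rfl

theorem N_dvd (h : R p) (hs : ∀ c, aeval (![C c * X 1, X 1] : Fin 2 → R p) h = 0) : N p ∣ h := by
  rw [← N_eq]; exact prod_dvd _ _ (fun c _ => hs c)

/-- restriction to the line `X 1 = 0` -/
noncomputable def res (p : ℕ) : R p →ₐ[ZMod p] Polynomial (ZMod p) := aeval ![Polynomial.X, 0]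

theorem pm1 : p - 1 ≠ 0 := by have := hpf.out.one_lt; omega

theorem res_N : res p (N p) = Polynomial.X ^ p := by
  simp [res, N, pm1]

theorem N_ne : N p ≠ 0 := by
  intro h
  have := res_N (p := p)
  rw [h, map_zero] at this
  exact pow_ne_zero p Polynomial.X_ne_zero this.symm

theorem X1_dvd_of_res (h : R p) (hh : res p h = 0) : X 1 ∣ h := by
  have h3 := dvd_sub_aeval (X 1) (![X 0, 0] : Fin 2 → R p)
      (by intro i; fin_cases i <;> simp) h
  have : aeval (![X 0, 0] : Fin 2 → R p) h = Polynomial.aeval (X 0 : R p) (res p h) := by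
    have : (aeval (![X 0, 0] : Fin 2 → R p)) = (Polynomial.aeval (X 0 : R p)).comp (res p) := by
      ext i : 1; fin_cases i <;> simp [res]
    rw [this]; rfl
  rw [this, hh] at h3
  simpa using h3

theorem deg_aeval (P : Polynomial (ZMod p)) (u : R p) :
    (Polynomial.aeval u P).totalDegree ≤ P.natDegree * u.totalDegree := by
  rw [Polynomial.aeval_eq_sum_range]
  apply totalDegree_finsetSum_le
  intro i hi
  refine (totalDegree_smul_le _ _).trans ((totalDegree_pow _ _).trans ?_)
  exact Nat.mul_le_mul_right _ (by simpa [Nat.lt_succ_iff] using hi)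

theorem deg_res (v : Fin 2 → Polynomial (ZMod p)) (hv : ∀ i, (v i).natDegree ≤ 1) (f : R p) :
    (aeval v f).natDegree ≤ f.totalDegree := by
  simpa using aeval_natDegree_le f le_rfl v hv

theorem deg_pos (u : R p) (hu : u ≠ 0) (h0 : aeval (fun _ => (0 : ZMod p)) u = 0) :
    0 < u.totalDegree := by
  by_contra h
  have h1 : u.totalDegree = 0 := by omega
  rw [totalDegree_eq_zero_iff_eq_C] at h1
  rw [h1] at h0
  simp only [aeval_C, Algebra.algebraMap_self, RingHom.id_apply] at h0
  rw [h0] at h1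
  simp at h1
  exact hu h1

theorem N_zero : aeval (fun _ => (0 : ZMod p)) (N p) = 0 := by
  simp [N, hpf.out.ne_zero]

instance : CharP (R p) p := inferInstance

theorem C_pow (c : ZMod p) : (C c : R p) ^ p = C c := by
  rw [← MvPolynomial.C_pow, ZMod.pow_card]

theorem y_pow : (X 1 : R p) ^ p = X 1 ^ (p - 1) * X 1 := by
  rw [← pow_succ, Nat.sub_add_cancel hpf.out.one_le]

theorem N_inv (c : ZMod p) : aeval (![X 0 + C c * X 1, X 1] : Fin 2 → R p) (N p) = N p := by
  simp only [N, map_sub, map_mul, map_pow, aeval_X, Matrix.cons_val_zero, Matrix.cons_val_one]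
  rw [add_pow_char, mul_pow, Dickson.C_pow, y_pow]
  ring

theorem unip (n : ℕ) : ∀ f : R p, f.totalDegree ≤ n →
    (∀ c, aeval (![X 0 + C c * X 1, X 1] : Fin 2 → R p) f = f) →
    Polynomial.derivative (res p f) = 0 := by
  induction n using Nat.strong_induction_on with
  | _ n ih =>
  intro f hn hf
  set g : Polynomial (ZMod p) := aeval ![0, Polynomial.X] f with hg
  set G : R p := Polynomial.aeval (X 1) g with hG
  have hG' : ∀ v : Fin 2 → R p, aeval v G = aeval ![0, v 1] f := by
    intro v
    have : (aeval v).comp ((Polynomial.aeval (X 1 : R p)).comp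
      (aeval (![0, Polynomial.X] : Fin 2 → Polynomial (ZMod p)))) = aeval ![0, v 1] := by
      ext i : 1; fin_cases i <;> simp
    rw [← this]; rfl
  have hGinv : ∀ c, aeval (![X 0 + C c * X 1, X 1] : Fin 2 → R p) G = G := by
    intro c
    rw [hG', ← congrArg (fun t => t) (aeval_X_left_apply G), hG']
    simp
  have hres : ∀ c, aeval (![C c * X 1, X 1] : Fin 2 → R p) (f - G) = 0 := by
    intro c
    rw [map_sub, hG', sub_eq_zero]
    conv_rhs => rw [← hf c, aeval_comp]
    apply aeval_congr' <;> simp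
  obtain ⟨k, hk⟩ := N_dvd _ hres
  have hkinv : ∀ c, aeval (![X 0 + C c * X 1, X 1] : Fin 2 → R p) k = k := by
    intro c
    have := congrArg (aeval (![X 0 + C c * X 1, X 1] : Fin 2 → R p)) hk
    rw [map_sub, hf, hGinv, map_mul, N_inv, hk] at this
    exact (mul_left_cancel₀ N_ne this).symm
  have hfG : f = G + N p * k := by rw [← hk]; ring
  have hresG : res p G = Polynomial.C (g.coeff 0) := by
    have : (res p).comp (Polynomial.aeval (X 1 : R p)) = Polynomial.aeval 0 := by
      ext; simp [res]
    have h2 : res p G = Polynomial.aeval 0 g := by rw [← this]; rfl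
    rw [h2]; simp [Polynomial.aeval_def, Polynomial.eval₂_at_zero, Polynomial.algebraMap_eq]
  have hk0 : Polynomial.derivative (res p k) = 0 := by
    by_cases h0 : k = 0
    · simp [h0]
    · apply ih k.totalDegree _ k le_rfl hkinv
      have h1 : (f - G).totalDegree ≤ f.totalDegree := by
        refine (totalDegree_sub _ _).trans (max_le le_rfl ?_)
        refine (deg_aeval _ _).trans ?_
        rw [totalDegree_X, mul_one]
        exact deg_res _ (by intro i; fin_cases i <;> simp) _
      rw [hk, totalDegree_mul_of_isDomain N_ne h0] at h1
      have := deg_pos _ (N_ne (p := p)) N_zero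
      omega
  rw [hfG, map_add, map_mul, hresG, res_N]
  simp [hk0, Polynomial.derivative_X_pow]

/-- the Dickson invariants -/
noncomputable def r (p : ℕ) : R p := X 0 ^ p * X 1 - X 0 * X 1 ^ p

noncomputable def q (p : ℕ) : R p := X 1 ^ (p ^ 2 - p) + X 0 ^ (p - 1) * (X 0 ^ (p - 1) - X 1 ^ (p - 1)) ^ (p - 1)

theorem r_eq : r p = X 1 * N p := by
  rw [r, N, y_pow]; ring

theorem N_eq' : N p = X 0 * (X 0 ^ (p - 1) - X 1 ^ (p - 1)) := by
  rw [N, mul_sub, ← pow_succ', Nat.sub_add_cancel hpf.out.one_le]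

theorem r_ne : r p ≠ 0 := by rw [r_eq]; exact mul_ne_zero X1_ne N_ne

theorem q_eq : q p = X 1 ^ (p ^ 2 - p) + N p ^ (p - 1) := by
  rw [q, N_eq', mul_pow]

theorem rq : r p * q p = X 0 ^ (p ^ 2) * X 1 - X 0 * X 1 ^ (p ^ 2) := by
  have h1 : N p * N p ^ (p - 1) = X 0 ^ (p ^ 2) - X 0 ^ p * X 1 ^ (p ^ 2 - p) := by
    rw [← pow_succ', Nat.sub_add_cancel hpf.out.one_le, N, sub_pow_char, mul_pow, ← pow_mul,
      ← pow_mul, Nat.sub_mul, one_mul, sq]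
  have h2 : (X 1 : R p) ^ (p ^ 2) = X 1 ^ (p ^ 2 - p) * X 1 ^ (p - 1) * X 1 := by
    rw [mul_assoc, ← y_pow, ← pow_add, Nat.sub_add_cancel]
    exact Nat.le_self_pow (by norm_num) p
  rw [q_eq, r_eq, mul_add, mul_assoc (X 1) (N p) (N p ^ (p-1)), h1, h2, N]
  ring

/-- the action -/
noncomputable def act (g : Matrix.SpecialLinearGroup (Fin 2) (ZMod p)) : R p →ₐ[ZMod p] R p :=
  aeval (fun i : Fin 2 =>
          C ((g : Matrix (Fin 2) (Fin 2) (ZMod p)) i 0) * X 0 +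
          C ((g : Matrix (Fin 2) (Fin 2) (ZMod p)) i 1) * X 1)

theorem lin_pow (a b : ZMod p) : (C a * X 0 + C b * X 1 : R p) ^ p = C a * X 0 ^ p + C b * X 1 ^ p := by
  rw [add_pow_char, mul_pow, mul_pow, Dickson.C_pow, Dickson.C_pow]

theorem lin_pow2 (a b : ZMod p) :
    (C a * X 0 + C b * X 1 : R p) ^ (p^2) = C a * X 0 ^ (p^2) + C b * X 1 ^ (p^2) := by
  rw [sq, pow_mul, lin_pow, add_pow_char, mul_pow, mul_pow, Dickson.C_pow, Dickson.C_pow,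
    ← pow_mul, ← pow_mul]

theorem det_C (g : Matrix.SpecialLinearGroup (Fin 2) (ZMod p)) :
    (C (g.1 0 0) * C (g.1 1 1) - C (g.1 0 1) * C (g.1 1 0) : R p) = 1 := by
  have := g.2
  rw [Matrix.det_fin_two] at this
  rw [← C_mul, ← C_mul, ← C_sub, this, C_1]

theorem act_r (g : Matrix.SpecialLinearGroup (Fin 2) (ZMod p)) : act g (r p) = r p := by
  simp only [act, r, map_sub, map_mul, map_pow, aeval_X]
  rw [lin_pow, lin_pow]
  linear_combination (X 0 ^ p * X 1 - X 0 * X 1 ^ p) * det_C g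

theorem act_q (g : Matrix.SpecialLinearGroup (Fin 2) (ZMod p)) : act g (q p) = q p := by
  have h : act g (r p * q p) = r p * q p := by
    rw [rq]
    simp only [act, map_sub, map_mul, map_pow, aeval_X]
    rw [lin_pow2, lin_pow2]
    linear_combination (X 0 ^ (p^2) * X 1 - X 0 * X 1 ^ (p^2)) * det_C g
  rw [map_mul, act_r] at h
  exact mul_left_cancel₀ r_ne h

theorem res_q : res p (q p) = Polynomial.X ^ (p * (p - 1)) := by
  have h : p ^ 2 - p ≠ 0 := by
    have := hpf.out.one_lt
    have : p < p ^ 2 := by nlinarith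
    omega
  rw [q_eq, map_add, map_pow, map_pow, res_N, ← pow_mul]
  simp [res, h]

theorem deg_q : (q p).totalDegree ≤ p * (p - 1) := by
  have hN : (N p).totalDegree ≤ p := by
    rw [N]
    refine (totalDegree_sub _ _).trans (max_le ?_ ?_)
    · simp
    · refine (totalDegree_mul _ _).trans ?_
      simp only [totalDegree_X, totalDegree_X_pow]
      have := hpf.out.one_le
      omega
  rw [q_eq]
  refine (totalDegree_add _ _).trans (max_le ?_ ?_)
  · simp [Nat.mul_sub, sq]
  · refine (totalDegree_pow _ _).trans ?_
    rw [mul_comm]; exact Nat.mul_le_mul_right _ hN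

theorem res_exp (f : R p) (hf : ∀ g, act g f = f) (n : ℕ) (hn : (res p f).coeff n ≠ 0) :
    p * (p - 1) ∣ n := by
  have h1 : p ∣ n := by
    have h := unip f.totalDegree f le_rfl (fun c => by
      have := hf ⟨!![1, c; 0, 1], by simp [Matrix.det_fin_two]⟩
      conv_rhs => rw [← this]
      apply aeval_congr' <;> simp)
    rcases n with _ | n
    · simp
    have h2 := congrArg (fun P => P.coeff n) h
    simp only [Polynomial.coeff_derivative, Polynomial.coeff_zero] at h2
    have h3 := (mul_eq_zero.1 h2).resolve_left hn
    rw [← ZMod.natCast_eq_zero_iff]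
    exact_mod_cast h3
  have h2 : p - 1 ∣ n := by
    have ht : ∀ a : (ZMod p)ˣ, a ^ n = 1 := by
      intro a
      obtain ⟨g, hg⟩ : ∃ g : Matrix.SpecialLinearGroup (Fin 2) (ZMod p),
          g.1 = !![(a : ZMod p), 0; 0, ((a⁻¹ : (ZMod p)ˣ) : ZMod p)] := ⟨⟨_, by
        rw [Matrix.det_fin_two_of, Units.mul_inv]; ring⟩, rfl⟩
      have h00 : g.1 0 0 = a := by rw [hg]; rfl
      have h10 : g.1 1 0 = 0 := by rw [hg]; rfl
      clear hg
      have := hf g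
      have h3 := congrArg (res p) this
      have h4 : ∀ g, res p (act g f) = aeval (fun i => res p (C (g.1 i 0) * X 0 + C (g.1 i 1) * X 1)) f := by
        intro g; exact aeval_comp _ _ _
      have h5 : (res p f).comp (Polynomial.C (a : ZMod p) * Polynomial.X) = res p f := by
        conv_rhs => rw [← h3, h4]
        have : (Polynomial.aeval (Polynomial.C (a : ZMod p) * Polynomial.X)).comp (res p)
          = aeval ![Polynomial.C (a : ZMod p) * Polynomial.X, 0] := by
          ext i : 1; fin_cases i <;> simp [res]
        rw [Polynomial.comp_eq_aeval]
        trans aeval ![Polynomial.C (a : ZMod p) * Polynomial.X, 0] f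
        · rw [← this]; rfl
        · apply aeval_congr' <;> simp [h00, h10, res, Polynomial.algebraMap_eq]
      have h6 := congrArg (fun P => P.coeff n) h5
      simp only [Polynomial.comp_C_mul_X_coeff] at h6
      have h7 : (a : ZMod p) ^ n = 1 := by
        apply mul_left_cancel₀ hn
        rw [h6, mul_one]
      ext; push_cast; exact h7
    obtain ⟨a, ha⟩ := IsCyclic.exists_generator (α := (ZMod p)ˣ)
    have h3 := orderOf_eq_card_of_forall_mem_zpowers ha
    rw [Nat.card_eq_fintype_card, ZMod.card_units] at h3
    rw [← h3]
    exact orderOf_dvd_of_pow_eq_one (ht a)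
  refine Nat.Coprime.mul_dvd_of_dvd_of_dvd ?_ h1 h2
  have := Nat.coprime_self_sub_right (n := p) (m := 1) hpf.out.one_le
  exact this.2 (by simp)

theorem main (n : ℕ) : ∀ f : R p, f.totalDegree ≤ n → (∀ g, act g f = f) →
    f ∈ Algebra.adjoin (ZMod p) {q p, r p} := by
  induction n using Nat.strong_induction_on with
  | _ n ih =>
  intro f hn hf
  set m := p * (p - 1) with hm
  have hm0 : m ≠ 0 := mul_ne_zero hpf.out.ne_zero pm1
  set P := Polynomial.contract m (res p f) with hP
  have hPe : Polynomial.expand (ZMod p) m P = res p f := by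
    ext i
    rw [Polynomial.coeff_expand (Nat.pos_of_ne_zero hm0), hP]
    split_ifs with h
    · rw [Polynomial.coeff_contract hm0, Nat.div_mul_cancel h]
    · by_contra h'
      exact h (res_exp f hf i (Ne.symm h'))
  set Q := Polynomial.aeval (q p) P with hQ
  have hQres : res p Q = res p f := by
    rw [← hPe, hQ, Polynomial.expand_eq_comp_X_pow, Polynomial.comp_eq_aeval, ← res_q,
      Polynomial.aeval_algHom_apply]
  have hQinv : ∀ g, act g Q = Q := by
    intro g
    rw [hQ, ← Polynomial.aeval_algHom_apply, act_q]
  have hQmem : Q ∈ Algebra.adjoin (ZMod p) {q p, r p} := by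
    rw [hQ]
    exact Algebra.adjoin_mono (by simp) (Polynomial.aeval_mem_adjoin_singleton _ _)
  have hQdeg : Q.totalDegree ≤ f.totalDegree := by
    refine (deg_aeval _ _).trans ?_
    refine (Nat.mul_le_mul_left _ deg_q).trans ?_
    rw [← hm, ← Polynomial.natDegree_expand, hPe]
    exact deg_res _ (by intro i; fin_cases i <;> simp) _
  have hinv : ∀ g, act g (f - Q) = f - Q := by
    intro g; rw [map_sub, hf, hQinv]
  have hr0 : res p (f - Q) = 0 := by rw [map_sub, hQres, sub_self]
  have hN : N p ∣ f - Q := by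
    apply N_dvd
    intro c
    have h2 : ((Polynomial.aeval (X 1 : R p)).comp (res p)) = aeval ![X 1, 0] := by
      ext i : 1; fin_cases i <;> simp [res]
    have h3 : aeval (![X 1, 0] : Fin 2 → R p) (f - Q) = 0 := by
      rw [← h2]; simp only [AlgHom.comp_apply]; rw [hr0, map_zero]
    have h4 := hinv ⟨!![0, 1; -1, c], by simp [Matrix.det_fin_two]⟩
    rw [← h4]; unfold act; rw [ aeval_comp, ← h3]
    apply aeval_congr' <;> simp [algebraMap_eq]
  obtain ⟨k, hk⟩ := hN
  have hk1 : X 1 ∣ k := by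
    apply X1_dvd_of_res
    rw [hk, map_mul, res_N] at hr0
    exact (mul_eq_zero.1 hr0).resolve_left (pow_ne_zero _ Polynomial.X_ne_zero)
  obtain ⟨l, rfl⟩ := hk1
  have hk' : f - Q = r p * l := by rw [hk, r_eq]; ring
  have hl : l ∈ Algebra.adjoin (ZMod p) {q p, r p} := by
    by_cases h0 : l = 0
    · rw [h0]; exact zero_mem _
    apply ih l.totalDegree _ l le_rfl
    · intro g
      have := hinv g
      rw [hk', map_mul, act_r] at this
      exact mul_left_cancel₀ r_ne this
    · have h1 : (f - Q).totalDegree ≤ f.totalDegree :=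
        (totalDegree_sub _ _).trans (max_le le_rfl hQdeg)
      rw [hk', totalDegree_mul_of_isDomain r_ne h0] at h1
      have := deg_pos _ (r_ne (p := p)) (by simp [r, hpf.out.ne_zero])
      omega
  have : f = Q + r p * l := by rw [← hk']; ring
  rw [this]
  exact add_mem hQmem (mul_mem (Algebra.subset_adjoin (by simp)) hl)

theorem conv (f : R p) (hf : f ∈ Algebra.adjoin (ZMod p) {q p, r p}) (g) : act g f = f := by
  have : Algebra.adjoin (ZMod p) {q p, r p} ≤ AlgHom.equalizer (act g) (AlgHom.id _ _) := by
    apply Algebra.adjoin_le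
    rintro x (rfl | rfl)
    · exact act_q g
    · exact act_r g
  exact this hf

end Dickson

/-- Let `p` be an odd prime.  Writing `ξ = X 0`, `η = X 1` in `(ZMod p)[ξ, η]`, with
`q = η^(p²-p) + ξ^(p-1)·(ξ^(p-1) - η^(p-1))^(p-1)` and `r = ξ·η·(ξ^(p-1) - η^(p-1))`,
a polynomial `f` is invariant under the substitution action of every `g ∈ SL₂(ZMod p)`
if and only if `f` lies in the `(ZMod p)`-subalgebra generated by `q` and `r`. -/
theorem stmt_0 (p : ℕ) (hp : p.Prime) (hodd : Odd p)
    (q r : MvPolynomial (Fin 2) (ZMod p))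
    (hq : q = X 1 ^ (p ^ 2 - p) +
      X 0 ^ (p - 1) * (X 0 ^ (p - 1) - X 1 ^ (p - 1)) ^ (p - 1))
    (hr : r = X 0 * X 1 * (X 0 ^ (p - 1) - X 1 ^ (p - 1)))
    (f : MvPolynomial (Fin 2) (ZMod p)) :
    (∀ g : Matrix.SpecialLinearGroup (Fin 2) (ZMod p),
        aeval (fun i : Fin 2 =>
          C ((g : Matrix (Fin 2) (Fin 2) (ZMod p)) i 0) * X 0 +
          C ((g : Matrix (Fin 2) (Fin 2) (ZMod p)) i 1) * X 1) f = f) ↔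
      f ∈ Algebra.adjoin (ZMod p) {q, r} := by
  have : Fact p.Prime := ⟨hp⟩
  have hq' : q = Dickson.q p := hq
  have hr' : r = Dickson.r p := by
    rw [hr, Dickson.r_eq, Dickson.N_eq']; ring
  rw [hq', hr']
  exact ⟨fun h => Dickson.main _ f le_rfl h, fun h g => Dickson.conv f h g⟩
end

section
/- Let p be an odd prime. For every invertible 2×2 matrix g over ZMod p, the substitution action of g fixes q and fixes r^(p−1); moreover, if det g = 1, then it also fixes r. -/
open MvPolynomial

/-- Let `p` be an odd prime.  For every invertible `2×2` matrix `g` over `ZMod p`, the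
substitution action of `g` (given by `ξ ↦ g₀₀·ξ + g₀₁·η`, `η ↦ g₁₀·ξ + g₁₁·η`) fixes
`q` and fixes `r^(p-1)`; moreover if `det g = 1` then it also fixes `r`. -/
theorem stmt_8 (p : ℕ) (hp : p.Prime) (hodd : Odd p)
    (q r : MvPolynomial (Fin 2) (ZMod p))
    (hq : q = X 1 ^ (p ^ 2 - p) +
      X 0 ^ (p - 1) * (X 0 ^ (p - 1) - X 1 ^ (p - 1)) ^ (p - 1))
    (hr : r = X 0 * X 1 * (X 0 ^ (p - 1) - X 1 ^ (p - 1)))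
    (g : Matrix (Fin 2) (Fin 2) (ZMod p)) (hg : IsUnit g.det) :
    aeval (fun i : Fin 2 => C (g i 0) * X 0 + C (g i 1) * X 1) q = q ∧
    aeval (fun i : Fin 2 => C (g i 0) * X 0 + C (g i 1) * X 1) (r ^ (p - 1)) = r ^ (p - 1) ∧
    (g.det = 1 → aeval (fun i : Fin 2 => C (g i 0) * X 0 + C (g i 1) * X 1) r = r) := by
  haveI : Fact p.Prime := ⟨hp⟩
  have hp2 := hp.two_le
  set φ := aeval (R := ZMod p) (fun i : Fin 2 =>
    (C (g i 0) * X 0 + C (g i 1) * X 1 : MvPolynomial (Fin 2) (ZMod p))) with hφ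
  have e1 : ∀ x : MvPolynomial (Fin 2) (ZMod p), x * x ^ (p - 1) = x ^ p := fun x => by
    rw [← pow_succ']; congr 1; omega
  have hr' : r = X 0 ^ p * X 1 - X 0 * X 1 ^ p := by
    rw [hr, ← e1, ← e1]; ring
  have e3 : (X 1 : MvPolynomial (Fin 2) (ZMod p)) ^ (p ^ 2 - p) = (X 1 ^ (p - 1)) ^ p := by
    rw [← pow_mul]; congr 1; rw [Nat.sub_mul, one_mul, sq]
  have hs : r * q = (X 0 ^ p) ^ p * X 1 - X 0 * (X 1 ^ p) ^ p := by
    have h1 : (X 0 ^ (p - 1) - X 1 ^ (p - 1)) * (X 0 ^ (p - 1) - X 1 ^ (p - 1)) ^ (p - 1)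
      = (X 0 ^ (p - 1)) ^ p - (X 1 ^ (p - 1) : MvPolynomial (Fin 2) (ZMod p)) ^ p := by
      rw [e1, sub_pow_char]
    rw [hq, hr, e3, ← e1 (X 0), ← e1 (X 1), mul_pow, mul_pow, ← e1 (X 0), ← e1 (X 1)]
    linear_combination (X 0 * X 1 * X 0 ^ (p - 1)) * h1
  have hc : ∀ c : ZMod p, (C c : MvPolynomial (Fin 2) (ZMod p)) ^ p = C c := fun c => by
    rw [← C_pow, ZMod.pow_card]
  have f0 : φ (X 0) = C (g 0 0) * X 0 + C (g 0 1) * X 1 := by simp [hφ]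
  have f1 : φ (X 1) = C (g 1 0) * X 0 + C (g 1 1) * X 1 := by simp [hφ]
  have hd : (C g.det : MvPolynomial (Fin 2) (ZMod p))
      = C (g 0 0) * C (g 1 1) - C (g 0 1) * C (g 1 0) := by
    rw [Matrix.det_fin_two]; simp
  have hφr : φ r = C g.det * r := by
    rw [hr', hd]
    simp only [map_sub, map_mul, map_pow, f0, f1, add_pow_char, mul_pow, hc]
    ring
  have hφs : φ (r * q) = C g.det * (r * q) := by
    rw [hs, hd]
    simp only [map_sub, map_mul, map_pow, f0, f1, add_pow_char, mul_pow, hc]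
    ring
  have hd0 : g.det ≠ 0 := hg.ne_zero
  have hr0 : r ≠ 0 := by
    rw [hr]
    refine mul_ne_zero (mul_ne_zero (X_ne_zero _) (X_ne_zero _)) fun h => ?_
    have := congrArg (eval ![(1 : ZMod p), 0]) h
    have hp1 : p - 1 ≠ 0 := by omega
    simp [hp1] at this
  refine ⟨?_, ?_, fun h => by rw [hφr, h]; simp⟩
  · have hne : C g.det * r ≠ 0 := mul_ne_zero (by simpa using hd0) hr0
    apply mul_left_cancel₀ hne
    rw [← hφr, ← map_mul, hφs, hφr, mul_assoc]
  · rw [map_pow, hφr, mul_pow, ← C_pow, ZMod.pow_card_sub_one_eq_one hd0]; simp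
end

section
/- Let p be an odd prime. Let ψ : ℤ[x₁, …, x_p] → (ZMod p)[X] be the ring homomorphism sending x_i to i·X for i = 1, …, p, and let A be the ℤ-subalgebra of ℤ[x₁, …, x_p] generated by all differences x_i − x_j. Then the image under ψ of the set of S_p-invariant elements of A (those fixed by every permutation of the variables) is the subring of (ZMod p)[X] generated by X^(p²−p). -/
open MvPolynomial

/-- The ring endomorphism `X ↦ X + 2ε` of the dual numbers over `R[X]`. -/
noncomputable def thetaHom (R : Type*) [CommRing R] :
    DualNumber (Polynomial R) →+* DualNumber (Polynomial R) where
  toFun z := TrivSqZeroExt.inl z.fst +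
    TrivSqZeroExt.inr (z.snd + 2 * Polynomial.derivative z.fst)
  map_one' := by ext <;> simp
  map_zero' := by ext <;> simp
  map_add' a b := by
    ext : 1
    · simp
    · simp; ring
  map_mul' a b := by
    ext : 1
    · simp
    · simp; ring

theorem mem_closure_of_coeff (p m : ℕ) [Fact p.Prime] (P : Polynomial (ZMod p))
    (h : ∀ d, P.coeff d ≠ 0 → m ∣ d) :
    P ∈ Subring.closure {(Polynomial.X : Polynomial (ZMod p)) ^ m} := by
  rw [P.as_sum_support_C_mul_X_pow]
  refine Subring.sum_mem _ fun d hd => ?_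
  obtain ⟨k, rfl⟩ := h d (Polynomial.mem_support_iff.mp hd)
  refine Subring.mul_mem _ ?_ ?_
  · rw [← ZMod.natCast_zmod_val (P.coeff (m * k)), map_natCast]
    exact natCast_mem _ _
  · rw [pow_mul]
    exact pow_mem (Subring.subset_closure (Set.mem_singleton _)) _

/-- Let `p` be an odd prime, `ψ : ℤ[x₁, …, x_p] → (ZMod p)[X]` the ring homomorphism
sending `x_i ↦ i·X` (for `i = 1, …, p`; here `x_i = X i` with `i : Fin p` corresponding
to the index `(i : ℕ) + 1`), and `A` the `ℤ`-subalgebra generated by the differences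
`x_i - x_j`.  The image under `ψ` of the `S_p`-invariant elements of `A` is the subring
of `(ZMod p)[X]` generated by `X^(p²-p)`. -/
theorem stmt_16 (p : ℕ) (hp : p.Prime) (hodd : Odd p)
    (ψ : MvPolynomial (Fin p) ℤ →+* Polynomial (ZMod p))
    (hψ : ψ = (aeval fun i : Fin p =>
      Polynomial.C ((((i : ℕ) + 1 : ℕ) : ZMod p)) * Polynomial.X :
        MvPolynomial (Fin p) ℤ →ₐ[ℤ] Polynomial (ZMod p)).toRingHom)
    (A : Subalgebra ℤ (MvPolynomial (Fin p) ℤ))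
    (hA : A = Algebra.adjoin ℤ {d : MvPolynomial (Fin p) ℤ | ∃ i j : Fin p, d = X i - X j}) :
    ψ '' {f : MvPolynomial (Fin p) ℤ | f ∈ A ∧ ∀ g : Equiv.Perm (Fin p), rename (⇑g) f = f} =
      ↑(Subring.closure {(Polynomial.X : Polynomial (ZMod p)) ^ (p ^ 2 - p)}) := by
  haveI : Fact p.Prime := ⟨hp⟩
  have hp2 : p ≠ 2 := by rintro rfl; exact absurd hodd (by decide)
  have h2 : (2 : ZMod p) ≠ 0 := by
    intro h
    have : ((2 : ℕ) : ZMod p) = 0 := by exact_mod_cast h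
    rw [ZMod.natCast_eq_zero_iff] at this
    exact hp2 ((Nat.prime_dvd_prime_iff_eq hp Nat.prime_two).mp this)
  let c : Fin p → ZMod p := fun i => (((i : ℕ) + 1 : ℕ) : ZMod p)
  have hcinj : Function.Injective c := by
    intro i j hij
    have h1 : ((i : ℕ) : ZMod p) = ((j : ℕ) : ZMod p) := by
      have : (((i : ℕ) + 1 : ℕ) : ZMod p) = (((j : ℕ) + 1 : ℕ) : ZMod p) := hij
      push_cast at this
      exact add_right_cancel this
    rw [ZMod.natCast_eq_natCast_iff] at h1
    exact Fin.ext (Nat.ModEq.eq_of_lt_of_lt h1 i.2 j.2)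
  have hcbij : Function.Bijective c := by
    rw [Fintype.bijective_iff_injective_and_card]
    exact ⟨hcinj, by simp [ZMod.card]⟩
  let e : Fin p ≃ ZMod p := Equiv.ofBijective c hcbij
  have he : ∀ i, e i = c i := fun i => rfl
  have hψX : ∀ i, ψ (X i) = Polynomial.C (c i) * Polynomial.X := by
    intro i; rw [hψ]; simp [c]
  subst hA
  apply Set.Subset.antisymm
  · rintro _ ⟨f, ⟨hfA, hfS⟩, rfl⟩
    -- divisibility by p - 1
    have hscale : ∀ a : (ZMod p)ˣ, (ψ f).comp (Polynomial.C (a : ZMod p) * Polynomial.X) = ψ f := by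
      intro a
      let τ : Equiv.Perm (Fin p) := (e.trans (Units.mulLeft a)).trans e.symm
      have hτ : ∀ i, c (τ i) = a * c i := by
        intro i; rw [← he, ← he]; simp [τ]
      have key : (Polynomial.compRingHom (Polynomial.C (a : ZMod p) * Polynomial.X)).comp ψ
          = ψ.comp (rename (τ : Fin p → Fin p) :
            MvPolynomial (Fin p) ℤ →ₐ[ℤ] MvPolynomial (Fin p) ℤ).toRingHom := by
        apply MvPolynomial.ringHom_ext
        · intro r; simp
        · intro i
          simp [hψX, hτ]; ring
      have := congrArg (fun F => F f) key
      simp only [RingHom.comp_apply, Polynomial.coe_compRingHom_apply] at this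
      rw [this]
      exact congrArg ψ (hfS τ)
    have hd1 : ∀ d, (ψ f).coeff d ≠ 0 → p - 1 ∣ d := by
      intro d hd
      obtain ⟨a, ha⟩ := IsCyclic.exists_generator (α := (ZMod p)ˣ)
      have hord : orderOf a = p - 1 := by
        rw [orderOf_eq_card_of_forall_mem_zpowers ha, Nat.card_eq_fintype_card, ZMod.card_units]
      rw [← hord]
      apply orderOf_dvd_of_pow_eq_one
      have := congrArg (fun P => Polynomial.coeff P d) (hscale a)
      simp only [Polynomial.comp_C_mul_X_coeff] at this
      have h3 := mul_left_cancel₀ hd (this.trans (mul_one _).symm)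
      exact Units.ext (by simpa using h3)
    -- divisibility by p
    let φ : MvPolynomial (Fin p) ℤ →ₐ[ℤ] DualNumber (Polynomial (ZMod p)) :=
      aeval fun i => TrivSqZeroExt.inl (Polynomial.C (c i) * Polynomial.X) +
        TrivSqZeroExt.inr (Polynomial.C (c i ^ 2))
    let σ : Equiv.Perm (Fin p) := (e.trans (Equiv.addRight 1)).trans e.symm
    have hσ : ∀ i, c (σ i) = c i + 1 := by
      intro i; rw [← he, ← he]; simp [σ]
    have hfst : (φ f).fst = ψ f := by
      have key : (TrivSqZeroExt.fstHom ℤ (Polynomial (ZMod p)) (Polynomial (ZMod p))).toRingHom.comp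
          φ.toRingHom = ψ := by
        apply MvPolynomial.ringHom_ext
        · intro r; simp
        · intro i
          simp [hψX, φ]
      exact congrArg (fun F => F f) key
    have hth : thetaHom (ZMod p) (φ f) = φ f := by
      have hX : ∀ i, thetaHom (ZMod p) (φ (X i)) = φ (rename (σ : Fin p → Fin p) (X i)) -
                (TrivSqZeroExt.inl Polynomial.X + TrivSqZeroExt.inr 1) := by
        intro i
        simp only [φ, rename_X, aeval_X, hσ]
        ext : 1
        · simp [thetaHom]; ring
        · simp [thetaHom]; ring
      have h4 : thetaHom (ZMod p) (φ f) = φ (rename (σ : Fin p → Fin p) f) := by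
        clear hfst hd1 hscale hfS
        induction hfA using Algebra.adjoin_induction with
        | mem x hx =>
          obtain ⟨i, j, rfl⟩ := hx
          rw [map_sub, map_sub, hX, hX, map_sub, map_sub]
          ring
        | algebraMap r => simp
        | add x y _ _ hx hy => simp only [map_add, hx, hy]
        | mul x y _ _ hx hy => simp only [map_mul, hx, hy]
      rw [h4, hfS]
    have hder : Polynomial.derivative (ψ f) = 0 := by
      have := congrArg TrivSqZeroExt.snd hth
      simp only [thetaHom, RingHom.coe_mk, MonoidHom.coe_mk, OneHom.coe_mk, TrivSqZeroExt.snd_add,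
        TrivSqZeroExt.snd_inl, TrivSqZeroExt.snd_inr, zero_add, hfst, add_eq_left] at this
      rcases mul_eq_zero.mp this with h | h
      · exfalso; apply h2
        have h5 : Polynomial.C (2 : ZMod p) = 0 := h
        exact Polynomial.C_eq_zero.mp h5
      · exact h
    have hd2 : ∀ d, (ψ f).coeff d ≠ 0 → p ∣ d := by
      intro d hd
      rcases d with _ | d
      · exact dvd_zero _
      have := congrArg (fun P => Polynomial.coeff P d) hder
      simp only [Polynomial.coeff_derivative, Polynomial.coeff_zero] at this
      rcases mul_eq_zero.mp this with h | h
      · exact absurd h hd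
      · rw [← ZMod.natCast_eq_zero_iff]; exact_mod_cast h
    apply mem_closure_of_coeff
    intro d hd
    have : p ^ 2 - p = p * (p - 1) := by rw [Nat.mul_sub, mul_one, sq]
    rw [this]
    refine Nat.Coprime.mul_dvd_of_dvd_of_dvd ?_ (hd2 d hd) (hd1 d hd)
    exact (Nat.coprime_self_sub_right hp.one_lt.le).mpr (Nat.coprime_one_right p)
  · intro P hP
    refine Subring.closure_induction ?_ ?_ ?_ ?_ ?_ ?_ hP
    · rintro _ rfl
      let Δ : MvPolynomial (Fin p) ℤ := ∏ x ∈ (Finset.univ : Finset (Fin p)).offDiag, (X x.1 - X x.2)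
      let u : ZMod p := ∏ x ∈ (Finset.univ : Finset (Fin p)).offDiag, (c x.1 - c x.2)
      have hu : u ≠ 0 := by
        refine Finset.prod_ne_zero_iff.mpr fun x hx => ?_
        rw [sub_ne_zero]
        exact fun h => (Finset.mem_offDiag.mp hx).2.2 (hcinj h)
      have hψΔ : ψ Δ = Polynomial.C u * Polynomial.X ^ (p ^ 2 - p) := by
        have h6 : (Finset.univ : Finset (Fin p)).offDiag.card = p ^ 2 - p := by
          rw [Finset.offDiag_card]; simp [sq]
        simp only [Δ, u, map_prod, map_sub, hψX]
        rw [← h6, ← Finset.prod_const, ← Finset.prod_mul_distrib]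
        exact Finset.prod_congr rfl fun x _ => by ring
      refine ⟨(((u⁻¹).val : ℕ) : MvPolynomial (Fin p) ℤ) * Δ, ⟨?_, ?_⟩, ?_⟩
      · refine Subalgebra.mul_mem _ (natCast_mem _ _) (Subalgebra.prod_mem _ fun x _ => ?_)
        exact Algebra.subset_adjoin ⟨x.1, x.2, rfl⟩
      · intro g
        rw [map_mul, map_natCast]
        congr 1
        simp only [Δ, map_prod, map_sub, rename_X]
        refine Finset.prod_equiv (g.prodCongr g) ?_ ?_
        · intro x; simp
        · intro x _; simp
      · rw [map_mul, map_natCast, hψΔ, ← Polynomial.C_eq_natCast, ZMod.natCast_zmod_val, ← mul_assoc,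
          ← Polynomial.C_mul, inv_mul_cancel₀ hu]
        simp
    · exact ⟨0, ⟨zero_mem _, by simp⟩, by simp⟩
    · exact ⟨1, ⟨one_mem _, by simp⟩, by simp⟩
    · rintro _ _ _ _ ⟨f, ⟨hf, hf'⟩, rfl⟩ ⟨g, ⟨hg, hg'⟩, rfl⟩
      exact ⟨f + g, ⟨add_mem hf hg, fun s => by rw [map_add, hf', hg']⟩, map_add _ _ _⟩
    · rintro _ _ ⟨f, ⟨hf, hf'⟩, rfl⟩
      exact ⟨-f, ⟨neg_mem hf, fun s => by rw [map_neg, hf']⟩, map_neg _ _⟩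
    · rintro _ _ _ _ ⟨f, ⟨hf, hf'⟩, rfl⟩ ⟨g, ⟨hg, hg'⟩, rfl⟩
      exact ⟨f * g, ⟨mul_mem hf hg, fun s => by rw [map_mul, hf', hg']⟩, map_mul _ _ _⟩
end

section
/- Let A be the ℤ-subalgebra of ℤ[x₁, x₂, x₃] generated by the differences x_i − x_j. Then: (a) the set of elements of A fixed by every permutation of the variables equals the ℤ-subalgebra generated by γ₂, γ₃ and δ; and (b) the kernel of the ℤ-algebra homomorphism ℤ[X, Y, Z] → ℤ[x₁, x₂, x₃] sending X ↦ γ₂, Y ↦ γ₃, Z ↦ δ is the principal ideal generated by 27Z − 4X³ − Y². -/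
open MvPolynomial

namespace S19
abbrev R := MvPolynomial (Fin 2) ℤ
noncomputable def s : R →ₐ[ℤ] R := aeval ![X 0 + X 1, - X 1]
noncomputable def t : R →ₐ[ℤ] R := aeval ![- X 0, X 0 + X 1]
noncomputable def u : R →ₐ[ℤ] R := aeval ![- X 1, - X 0]
noncomputable def π : R →ₐ[ℤ] Polynomial ℤ := aeval ![Polynomial.X, 0]
noncomputable def g2 : R := -(X 0 ^ 2 + X 0 * X 1 + X 1 ^ 2)
noncomputable def g3 : R := (2 * X 0 + X 1) * (X 0 - X 1) * (X 0 + 2 * X 1)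
noncomputable def D : R := X 0 * X 1 * (X 0 + X 1)

lemma s0 : s (X 0) = X 0 + X 1 := by simp [s]
lemma s1 : s (X 1) = - X 1 := by simp [s]
lemma t0 : t (X 0) = - X 0 := by simp [t]
lemma t1 : t (X 1) = X 0 + X 1 := by simp [t]
lemma u0 : u (X 0) = - X 1 := by simp [u]
lemma u1 : u (X 1) = - X 0 := by simp [u]
lemma p0 : π (X 0) = Polynomial.X := by simp [π]
lemma p1 : π (X 1) = 0 := by simp [π]

lemma π_s (f : R) : π (s f) = π f := by
  have : π.comp s = π := by
    ext i; fin_cases i <;> simp [s0, s1, p0, p1]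
  exact DFunLike.congr_fun this f

lemma dvd_of_π (f : R) (h : π f = 0) : X 1 ∣ f := by
  have : ∀ f : R, X 1 ∣ f - Polynomial.aeval (X 0 : R) (π f) := by
    intro f
    induction f using MvPolynomial.induction_on with
    | C a => simp [π]
    | add p q hp hq =>
      have := dvd_add hp hq
      convert this using 1
      simp only [map_add]; ring
    | mul_X p i hp =>
      fin_cases i
      · have := Dvd.dvd.mul_right hp (X 0)
        convert this using 1
        simp [p0]; ring
      · simp [p1]
  simpa [h] using this f

lemma deriv_id (f : R) : π (pderiv 1 (s f)) = Polynomial.derivative (π f) - π (pderiv 1 f) := by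
  induction f using MvPolynomial.induction_on with
  | C a => simp [π, s]
  | add p q hp hq => simp only [map_add, hp, hq]; ring
  | mul_X p i hp =>
    fin_cases i
    · simp [s0, p0, p1, hp, π_s, Derivation.leibniz, pderiv_X]; ring
    · simp [s1, p0, p1, hp, π_s, Derivation.leibniz, pderiv_X]

lemma cs (f : R) : constantCoeff (s f) = constantCoeff f := by
  induction f using MvPolynomial.induction_on with
  | C a => simp [s]
  | add p q hp hq => simp [hp, hq]
  | mul_X p i hp => fin_cases i <;> simp [s0, s1]

lemma ct (f : R) : constantCoeff (t f) = constantCoeff f := by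
  induction f using MvPolynomial.induction_on with
  | C a => simp [t]
  | add p q hp hq => simp [hp, hq]
  | mul_X p i hp => fin_cases i <;> simp [t0, t1]

lemma L1s (f : R) : constantCoeff (pderiv 1 (s f)) =
    constantCoeff (pderiv 0 f) - constantCoeff (pderiv 1 f) := by
  induction f using MvPolynomial.induction_on with
  | C a => simp [s]
  | add p q hp hq => simp only [map_add, hp, hq]; ring
  | mul_X p i hp =>
    fin_cases i
    · simp [s0, cs, Derivation.leibniz, pderiv_X]
    · simp [s1, cs, Derivation.leibniz, pderiv_X]

lemma L0t (f : R) : constantCoeff (pderiv 0 (t f)) =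
    constantCoeff (pderiv 1 f) - constantCoeff (pderiv 0 f) := by
  induction f using MvPolynomial.induction_on with
  | C a => simp [t]
  | add p q hp hq => simp only [map_add, hp, hq]; ring
  | mul_X p i hp =>
    fin_cases i
    · simp [t0, ct, Derivation.leibniz, pderiv_X]
    · simp [t1, ct, Derivation.leibniz, pderiv_X]

lemma L0π (f : R) : (π f).coeff 1 = constantCoeff (pderiv 0 f) ∧ (π f).coeff 0 = constantCoeff f := by
  induction f using MvPolynomial.induction_on with
  | C a =>
    have : π (C a) = Polynomial.C a := by simp [π]
    rw [this, Polynomial.coeff_C, Polynomial.coeff_C]; simp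
  | add p q hp hq => simp [hp, hq]
  | mul_X p i hp =>
    fin_cases i
    · simp [p0, hp, Derivation.leibniz, pderiv_X]
    · simp [p1, hp, Derivation.leibniz, pderiv_X]

lemma not_dvd01 : ¬ ((X 0 : R) ∣ X 1) := by
  rw [MvPolynomial.X_dvd_X]; decide
lemma not_dvd10 : ¬ ((X 1 : R) ∣ X 0 + X 1) := by
  rw [dvd_add_left dvd_rfl, MvPolynomial.X_dvd_X]; decide

lemma D_dvd (ε : ℤ) (hε : ε * ε = 1) (f : R) (ht : t f = ε • f) (hu : u f = ε • f)
    (hp : π f = 0) : ∃ k, f = D * k := by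
  have hε' : (C ε * C ε : R) = 1 := by rw [← C_mul, hε, C_1]
  simp only [← C_mul'] at ht hu
  obtain ⟨h, rfl⟩ := dvd_of_π f hp
  have e1 : X 1 * h = X 0 * (- C ε * u h) := by
    have : C ε * (C ε * (X 1 * h)) = C ε * (-X 0 * u h) := by
      rw [← hu, map_mul, u1]
    linear_combination this - X 1 * h * hε'
  have d0 : (X 0 : R) ∣ h :=
    ((MvPolynomial.X_prime (R := ℤ) (i := (0 : Fin 2))).dvd_or_dvd ⟨_, e1⟩).resolve_left not_dvd01
  obtain ⟨k, rfl⟩ := d0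
  have e2 : X 1 * k = (X 0 + X 1) * (- C ε * t k) := by
    have : C ε * (C ε * (X 1 * (X 0 * k))) = C ε * ((X 0 + X 1) * (- X 0 * t k)) := by
      rw [← ht, map_mul, t1, map_mul, t0]
    apply mul_left_cancel₀ (X_ne_zero (R := ℤ) (0 : Fin 2))
    linear_combination this - X 1 * (X 0 * k) * hε'
  obtain ⟨m, hm⟩ := ((MvPolynomial.X_prime (R := ℤ) (i := (1 : Fin 2))).dvd_or_dvd ⟨_, e2.symm⟩).resolve_left not_dvd10
  refine ⟨m, ?_⟩
  rw [hm] at e2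
  rw [D]; linear_combination X 0 * e2

lemma D_ne : D ≠ 0 := by
  have h : (X 0 + X 1 : R) ≠ 0 := fun h => not_dvd10 (by rw [h]; exact dvd_zero _)
  simp [D, h, X_ne_zero]

lemma sD : s D = - D := by simp [D, s0, s1]; ring
lemma tD : t D = - D := by simp [D, t0, t1]; ring
lemma uD : u D = - D := by simp [D, u0, u1]; ring

lemma D2_dvd (f : R) (hs : s f = f) (ht : t f = f) (hu : u f = f) (h : π f = 0) :
    ∃ k, f = D ^ 2 * k ∧ s k = k ∧ t k = k ∧ u k = k := by
  obtain ⟨k, rfl⟩ := D_dvd 1 rfl f (by simpa using ht) (by simpa using hu) h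
  have c : ∀ w : R →ₐ[ℤ] R, w D = - D → w (D * k) = D * k → w k = - k := by
    intro w hD hw
    apply mul_left_cancel₀ D_ne
    rw [map_mul, hD] at hw; linear_combination -hw
  have hk : π k = 0 := by
    have := π_s k
    rw [c s sD hs, map_neg] at this
    have : (2 : Polynomial ℤ) * π k = 0 := by linear_combination -this
    simpa using this
  obtain ⟨m, rfl⟩ := D_dvd (-1) rfl k (by simpa using c t tD ht) (by simpa using c u uD hu) hk
  have c' : ∀ w : R →ₐ[ℤ] R, w D = - D → w (D * (D * m)) = D * (D * m) → w m = m := by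
    intro w hD hw
    apply mul_left_cancel₀ D_ne
    apply mul_left_cancel₀ D_ne
    rw [map_mul, map_mul, hD] at hw; linear_combination hw
  exact ⟨m, by ring, c' s sD hs, c' t tD ht, c' u uD hu⟩

noncomputable def S : Subalgebra ℤ R := Algebra.adjoin ℤ {g2, g3, - D ^ 2}

lemma g2S : g2 ∈ S := Algebra.subset_adjoin (by simp)
lemma g3S : g3 ∈ S := Algebra.subset_adjoin (by simp)
lemma DS : D ^ 2 ∈ S := by
  have : - D ^ 2 ∈ S := Algebra.subset_adjoin (by simp)
  simpa using neg_mem this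

def Inv (f : R) : Prop := s f = f ∧ t f = f ∧ u f = f

lemma Inv_g2 : Inv g2 := by
  refine ⟨?_, ?_, ?_⟩ <;> simp [g2, s0, s1, t0, t1, u0, u1] <;> ring
lemma Inv_g3 : Inv g3 := by
  have a1 : s 2 = 2 := map_ofNat s 2
  have a2 : t 2 = 2 := map_ofNat t 2
  have a3 : u 2 = 2 := map_ofNat u 2
  refine ⟨?_, ?_, ?_⟩ <;> simp [g3, s0, s1, t0, t1, u0, u1, a1, a2, a3] <;> ring

lemma hom_g2 : g2.IsHomogeneous 2 := by
  unfold g2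
  refine ((((isHomogeneous_X_pow 0 2)).add ?_).add (isHomogeneous_X_pow 1 2)).neg
  exact (isHomogeneous_X _ _).mul (isHomogeneous_X _ _)
lemma hom_g3 : g3.IsHomogeneous 3 := by
  have h2 : ∀ i, (2 * X i : R).IsHomogeneous 1 := fun i => by
    have := (isHomogeneous_C (Fin 2) (2 : ℤ)).mul (isHomogeneous_X ℤ i)
    simpa using this
  exact (((h2 0).add (isHomogeneous_X _ _)).mul
    ((isHomogeneous_X _ _).sub (isHomogeneous_X _ _))).mul ((isHomogeneous_X _ _).add (h2 1))
lemma hom_D : D.IsHomogeneous 3 :=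
  ((isHomogeneous_X _ _).mul (isHomogeneous_X _ _)).mul ((isHomogeneous_X _ _).add (isHomogeneous_X _ _))

lemma mono (n : ℕ) (c : ℤ) (h1 : n = 1 → c = 0) (h2 : Odd n → Even c) :
    ∃ G : R, G ∈ S ∧ Inv G ∧ G.totalDegree ≤ n ∧ π G = Polynomial.monomial n c := by
  have pg2 : π g2 = - Polynomial.X ^ 2 := by simp [g2, p0, p1]
  have pg3 : π g3 = 2 * Polynomial.X ^ 3 := by
    have a1 : π 2 = 2 := map_ofNat π 2
    simp [g3, p0, p1, a1]; ring
  obtain ⟨i1, i2, i3⟩ := Inv_g2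
  obtain ⟨j1, j2, j3⟩ := Inv_g3
  rcases Nat.even_or_odd n with hn | hn
  · obtain ⟨m, rfl⟩ := hn
    refine ⟨C c * (-g2) ^ m, ?_, ?_, ?_, ?_⟩
    · exact mul_mem (Subalgebra.algebraMap_mem S c) (pow_mem (neg_mem g2S) _)
    · refine ⟨?_, ?_, ?_⟩ <;> simp [i1, i2, i3]
    · have := (isHomogeneous_C (Fin 2) c).mul (hom_g2.neg.pow m)
      exact this.totalDegree_le.trans (by omega)
    · simp [pg2, ← pow_mul, ← two_mul, Polynomial.C_mul_X_pow_eq_monomial, -eq_intCast]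
  · obtain ⟨d, rfl⟩ := h2 hn
    obtain ⟨m, rfl⟩ := hn
    rcases m with _ | m
    · have := h1 rfl
      refine ⟨0, zero_mem _, ⟨map_zero _, map_zero _, map_zero _⟩, by simp, by simp [this]⟩
    refine ⟨C d * ((-g2) ^ m * g3), ?_, ?_, ?_, ?_⟩
    · exact mul_mem (Subalgebra.algebraMap_mem S d) (mul_mem (pow_mem (neg_mem g2S) _) g3S)
    · refine ⟨?_, ?_, ?_⟩ <;> simp [i1, i2, i3, j1, j2, j3]
    · have := (isHomogeneous_C (Fin 2) d).mul ((hom_g2.neg.pow m).mul hom_g3)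
      exact this.totalDegree_le.trans (by omega)
    · simp [pg2, pg3, ← Polynomial.C_mul_X_pow_eq_monomial]
      ring

lemma main (n : ℕ) : ∀ f : R, f.totalDegree ≤ n → Inv f → f ∈ S := by
  induction n using Nat.strong_induction_on with
  | _ n ih =>
  intro f hf ⟨hs, ht, hu⟩
  have hdeg : (π f).natDegree ≤ n := by
    have := MvPolynomial.aeval_natDegree_le (n := 1) f hf ![Polynomial.X, (0 : Polynomial ℤ)]
      (by intro i; fin_cases i <;> simp)
    simpa [π] using this
  have hc1 : (π f).coeff 1 = 0 := by
    have a1 := L1s f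
    have a2 := L0t f
    rw [hs] at a1
    rw [ht] at a2
    rw [(L0π f).1]; omega
  have hodd : ∀ k, Odd k → Even ((π f).coeff k) := by
    intro k hk
    have a1 := deriv_id f
    rw [hs] at a1
    have : Polynomial.derivative (π f) = π (pderiv 1 f) + π (pderiv 1 f) := by
      linear_combination -a1
    obtain ⟨m, rfl⟩ := hk
    have := congrArg (fun q => q.coeff (2 * m)) this
    simp only [Polynomial.coeff_derivative, Polynomial.coeff_add] at this
    have e : Even ((π f).coeff (2 * m + 1) * ((2 * m : ℕ) + 1 : ℤ)) := ⟨_, this⟩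
    rw [Int.even_mul] at e
    refine e.resolve_right ?_
    push_cast
    simp [Int.even_add_one]
  choose G G1 G2 G3 G4 using fun k : ℕ => mono k ((π f).coeff k)
    (by rintro rfl; exact hc1) (hodd k)
  set H : R := ∑ k ∈ Finset.range (n + 1), G k with hH
  have HS : H ∈ S := sum_mem fun k _ => G1 k
  have HD : H.totalDegree ≤ n := totalDegree_finsetSum_le fun k hk =>
    (G3 k).trans (by simp at hk; omega)
  have Hπ : π H = π f := by
    rw [hH, map_sum]; simp only [G4]
    exact ((π f).as_sum_range' (n + 1) (by omega)).symm
  have Hs : s H = H := by rw [hH, map_sum]; exact Finset.sum_congr rfl fun k _ => (G2 k).1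
  have Ht : t H = H := by rw [hH, map_sum]; exact Finset.sum_congr rfl fun k _ => (G2 k).2.1
  have Hu : u H = H := by rw [hH, map_sum]; exact Finset.sum_congr rfl fun k _ => (G2 k).2.2
  obtain ⟨k, hk, k1, k2, k3⟩ := D2_dvd (f - H) (by simp [hs, Hs]) (by simp [ht, Ht])
    (by simp [hu, Hu]) (by simp [Hπ])
  have hfk : f = H + D ^ 2 * k := by rw [← hk]; ring
  have kS : k ∈ S := by
    by_cases hk0 : k = 0
    · rw [hk0]; exact zero_mem _
    have hD2 : (D ^ 2).totalDegree = 6 := (hom_D.pow 2).totalDegree (pow_ne_zero _ D_ne)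
    have e : (D ^ 2 * k).totalDegree = 6 + k.totalDegree := by
      rw [totalDegree_mul_of_isDomain (pow_ne_zero _ D_ne) hk0, hD2]
    have e2 : (f - H).totalDegree ≤ n := (totalDegree_sub _ _).trans (max_le hf HD)
    rw [hk, e] at e2
    exact ih k.totalDegree (by omega) k le_rfl ⟨k1, k2, k3⟩
  rw [hfk]
  exact add_mem HS (mul_mem DS kS)


abbrev T := MvPolynomial (Fin 3) ℤ
noncomputable def φ : R →ₐ[ℤ] T := aeval ![X 0 - X 1, X 1 - X 2]
lemma φ0 : φ (X 0) = X 0 - X 1 := by simp [φ]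
lemma φ1 : φ (X 1) = X 1 - X 2 := by simp [φ]

lemma φ_range : φ.range = Algebra.adjoin ℤ {d : T | ∃ i j : Fin 3, d = X i - X j} := by
  apply le_antisymm
  · rintro _ ⟨f, rfl⟩
    change φ f ∈ _
    induction f using MvPolynomial.induction_on with
    | C a => 
      rw [← algebraMap_eq, AlgHom.commutes]; exact Subalgebra.algebraMap_mem _ _
    | add p q hp hq => rw [map_add]; exact add_mem hp hq
    | mul_X p i hp =>
      rw [map_mul]
      refine mul_mem hp (Algebra.subset_adjoin ?_)
      fin_cases i
      · exact ⟨0, 1, φ0⟩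
      · exact ⟨1, 2, φ1⟩
  · rw [Algebra.adjoin_le_iff]
    rintro _ ⟨i, j, rfl⟩
    have key : ∀ i : Fin 3, (X i - X 2 : T) ∈ φ.range := by
      intro i
      fin_cases i
      · exact ⟨X 0 + X 1, by simp [φ0, φ1]⟩
      · exact ⟨X 1, by simp [φ1]⟩
      · exact ⟨0, by simp⟩
    have := sub_mem (key i) (key j)
    simpa using this

lemma φ_inj : Function.Injective φ := by
  let ρ : T →ₐ[ℤ] R := aeval ![X 0 + X 1, X 1, 0]
  have : ρ.comp φ = AlgHom.id ℤ R := by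
    ext i; fin_cases i <;> simp [φ0, φ1, ρ]
  exact Function.LeftInverse.injective (g := ρ) fun f => DFunLike.congr_fun this f

lemma φs (f : R) : rename (Equiv.swap (1 : Fin 3) 2) (φ f) = φ (s f) := by
  have : (rename (R := ℤ) (Equiv.swap (1 : Fin 3) 2)).comp φ = φ.comp s := by
    refine MvPolynomial.algHom_ext fun i => ?_
    have : Equiv.swap (1 : Fin 3) 2 0 = 0 := by decide
    fin_cases i <;> simp [φ0, φ1, s0, s1, this]
  exact DFunLike.congr_fun this f
lemma φt (f : R) : rename (Equiv.swap (0 : Fin 3) 1) (φ f) = φ (t f) := by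
  have : (rename (R := ℤ) (Equiv.swap (0 : Fin 3) 1)).comp φ = φ.comp t := by
    refine MvPolynomial.algHom_ext fun i => ?_
    have : Equiv.swap (0 : Fin 3) 1 2 = 2 := by decide
    fin_cases i <;> simp [φ0, φ1, t0, t1, this]
  exact DFunLike.congr_fun this f
lemma φu (f : R) : rename (Equiv.swap (0 : Fin 3) 2) (φ f) = φ (u f) := by
  have : (rename (R := ℤ) (Equiv.swap (0 : Fin 3) 2)).comp φ = φ.comp u := by
    refine MvPolynomial.algHom_ext fun i => ?_
    have : Equiv.swap (0 : Fin 3) 2 1 = 1 := by decide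
    fin_cases i <;> simp [φ0, φ1, u0, u1, this]
  exact DFunLike.congr_fun this f

lemma Inv_iff (f : R) : Inv f ↔ ∀ g : Equiv.Perm (Fin 3), rename g (φ f) = φ f := by
  constructor
  · rintro ⟨hs, ht, hu⟩ g
    have b1 := φs f
    have b2 := φt f
    have b3 := φu f
    rw [hs] at b1
    rw [ht] at b2
    rw [hu] at b3
    induction g using Equiv.Perm.swap_induction_on with
    | one => simp
    | swap_mul g x y hxy ih =>
      rw [Equiv.Perm.coe_mul, ← rename_rename, ih]
      fin_cases x <;> fin_cases y <;> first | exact absurd rfl hxy | assumption | (rw [Equiv.swap_comm]; assumption)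
  · intro h
    refine ⟨φ_inj ?_, φ_inj ?_, φ_inj ?_⟩
    · rw [← φs, h]
    · rw [← φt, h]
    · rw [← φu, h]

lemma Inv_S (f : R) (hf : f ∈ S) : Inv f := by
  have key : ∀ w : R →ₐ[ℤ] R, w g2 = g2 → w g3 = g3 → w D = - D → w f = f := by
    intro w w2 w3 wD
    have : S ≤ AlgHom.equalizer w (AlgHom.id ℤ R) := by
      rw [S, Algebra.adjoin_le_iff]
      rintro _ (rfl | rfl | rfl) <;> simp [AlgHom.mem_equalizer, w2, w3, wD]
    exact this hf
  exact ⟨key s Inv_g2.1 Inv_g3.1 sD, key t Inv_g2.2.1 Inv_g3.2.1 tD, key u Inv_g2.2.2 Inv_g3.2.2 uD⟩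

lemma partA : {f : T | f ∈ φ.range ∧ ∀ g : Equiv.Perm (Fin 3), rename (⇑g) f = f} =
    ↑(Algebra.adjoin ℤ {φ g2, φ g3, φ (- D ^ 2)}) := by
  have : Algebra.adjoin ℤ {φ g2, φ g3, φ (- D ^ 2)} = S.map φ := by
    rw [S, AlgHom.map_adjoin, Set.image_insert_eq, Set.image_insert_eq, Set.image_singleton]
  rw [this]
  ext f
  constructor
  · rintro ⟨⟨f, rfl⟩, h⟩
    exact ⟨f, main _ f le_rfl ((Inv_iff f).2 h), rfl⟩
  · rintro ⟨f, hf, rfl⟩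
    exact ⟨⟨f, rfl⟩, (Inv_iff f).1 (Inv_S f hf)⟩

noncomputable def ev (x z : T) : Polynomial (Polynomial ℤ) →+* T :=
  Polynomial.eval₂RingHom (Polynomial.aeval x : Polynomial ℤ →ₐ[ℤ] T).toRingHom z

lemma ev_C (x z : T) (p) : ev x z (Polynomial.C p) = Polynomial.aeval x p := by simp [ev]
lemma ev_X (x z : T) : ev x z Polynomial.X = z := by simp [ev]

lemma ev_map (F : T →ₐ[ℤ] T) (x z : T) (P) : F (ev x z P) = ev (F x) (F z) P := by
  have : (F : T →+* T).comp (ev x z) = ev (F x) (F z) := by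
    refine Polynomial.ringHom_ext (fun p => ?_) ?_
    · simp [ev_C, Polynomial.aeval_algHom_apply]
    · simp [ev_X]
  exact DFunLike.congr_fun this P

lemma ev_inj (γ δ : T) (w : T →ₐ[ℤ] Polynomial ℤ) (hw : w γ = - Polynomial.X ^ 2) (hw' : w δ = 0)
    (hδ : δ ≠ 0) (n : ℕ) : ∀ P, P.natDegree ≤ n → ev γ δ P = 0 → P = 0 := by
  have c0 : ∀ P, ev γ δ P = 0 → P.coeff 0 = 0 := by
    intro P hP
    have := congrArg w hP
    rw [← Polynomial.divX_mul_X_add P, map_add, map_mul, ev_X, ev_C, map_add, map_mul, hw',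
      ← Polynomial.aeval_algHom_apply, hw, mul_zero, zero_add, map_zero,
      ← Polynomial.comp_eq_aeval, Polynomial.comp_eq_zero_iff] at this
    rcases this with h | ⟨_, h⟩
    · exact h
    · exfalso
      have := congrArg (fun q => q.coeff 2) h
      simp [Polynomial.coeff_C] at this
  induction n with
  | zero =>
    intro P hn hP
    rw [Polynomial.eq_C_of_natDegree_le_zero hn, c0 P hP, map_zero]
  | succ n ih =>
    intro P hn hP
    have h0 := c0 P hP
    have e := Polynomial.divX_mul_X_add P
    rw [h0, map_zero, add_zero] at e
    have : P.divX = 0 := by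
      apply ih
      · rw [Polynomial.natDegree_divX_eq_natDegree_tsub_one]; omega
      · rw [← e, map_mul, ev_X] at hP
        exact (mul_eq_zero.1 hP).resolve_right hδ
    rw [← e, this, zero_mul]

noncomputable def rel : T := 27 * X 2 - 4 * X 0 ^ 3 - X 1 ^ 2

lemma normal (F : T) : ∃ P Q, rel ∣ F - (ev (X 0) (X 2) P + X 1 * ev (X 0) (X 2) Q) := by
  induction F using MvPolynomial.induction_on with
  | C a => exact ⟨Polynomial.C (Polynomial.C a), 0, by simp [ev_C]⟩
  | add p q hp hq =>
    obtain ⟨P, Q, h⟩ := hp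
    obtain ⟨P', Q', h'⟩ := hq
    refine ⟨P + P', Q + Q', ?_⟩
    convert dvd_add h h' using 1
    simp only [map_add]; ring
  | mul_X p i hp =>
    obtain ⟨P, Q, h⟩ := hp
    have h' := h.mul_right (X i)
    fin_cases i
    · refine ⟨P * Polynomial.C Polynomial.X, Q * Polynomial.C Polynomial.X, ?_⟩
      convert h' using 1
      simp [ev_C]; ring
    · refine ⟨Q * (27 * Polynomial.X - 4 * Polynomial.C Polynomial.X ^ 3), P, ?_⟩
      convert dvd_sub h' (dvd_mul_right rel (ev (X 0) (X 2) Q)) using 1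
      have a1 : ev (X 0) (X 2) 27 = 27 := map_ofNat _ 27
      have a2 : ev (X 0) (X 2) 4 = 4 := map_ofNat _ 4
      simp [ev_C, ev_X, rel, a1, a2]; ring
    · refine ⟨P * Polynomial.X, Q * Polynomial.X, ?_⟩
      convert h' using 1
      simp [ev_X]; ring

lemma partB (γ2 γ3 δ : T) (w : T →ₐ[ℤ] Polynomial ℤ) (hw : w γ2 = - Polynomial.X ^ 2)
    (hw' : w δ = 0) (hδ : δ ≠ 0) (hγ : γ3 ≠ 0) (ν : T →ₐ[ℤ] T) (n2 : ν γ2 = γ2) (n3 : ν γ3 = - γ3)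
    (nδ : ν δ = δ) (hr : 27 * δ - 4 * γ2 ^ 3 - γ3 ^ 2 = 0) :
    RingHom.ker (aeval ![γ2, γ3, δ] : T →ₐ[ℤ] T) = Ideal.span {rel} := by
  have e0 : aeval ![γ2, γ3, δ] (X 0 : T) = γ2 := by simp
  have e1 : aeval ![γ2, γ3, δ] (X 1 : T) = γ3 := by simp
  have e2 : aeval ![γ2, γ3, δ] (X 2 : T) = δ := by simp
  have er : aeval ![γ2, γ3, δ] rel = 0 := by
    rw [rel, ← hr]; simp only [map_sub, map_mul, map_pow, e0, e1, e2, map_ofNat]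
  apply le_antisymm
  · intro F hF
    rw [RingHom.mem_ker] at hF
    rw [Ideal.mem_span_singleton]
    obtain ⟨P, Q, h⟩ := normal F
    obtain ⟨G, hG⟩ := h
    have h1 := congrArg (aeval ![γ2, γ3, δ]) hG
    rw [map_mul, er, zero_mul, map_sub, hF, map_add, map_mul, ev_map, ev_map, e0, e1, e2] at h1
    have h2 := congrArg ν h1
    rw [map_sub, map_add, map_mul, map_zero, ev_map, ev_map, n2, n3, nδ] at h2
    have hP : ev γ2 δ P = 0 := by
      have : (2 : T) * ev γ2 δ P = 0 := by linear_combination -h1 - h2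
      simpa using this
    have hQ : ev γ2 δ Q = 0 := by
      have : γ3 * ev γ2 δ Q = 0 := by linear_combination -h1 - hP
      exact (mul_eq_zero.1 this).resolve_left hγ
    have := ev_inj γ2 δ w hw hw' hδ _ P le_rfl hP
    have := ev_inj γ2 δ w hw hw' hδ _ Q le_rfl hQ
    subst P Q
    refine ⟨G, ?_⟩
    rw [← hG]; simp
  · rw [Ideal.span_le, Set.singleton_subset_iff]
    exact er

end S19

/-- Let `A ⊆ ℤ[x₁, x₂, x₃]` be the `ℤ`-subalgebra generated by the differences
`x_i - x_j`, and set `γ₂ = 3σ₂ - σ₁²`, `γ₃ = 27σ₃ - 9σ₁σ₂ + 2σ₁³`,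
`δ = ∏_{i ≠ j}(x_i - x_j)`.  Then (a) the `S₃`-invariant elements of `A` form exactly
the `ℤ`-subalgebra generated by `γ₂, γ₃, δ`; and (b) the kernel of the `ℤ`-algebra map
`ℤ[X, Y, Z] → ℤ[x₁, x₂, x₃]`, `X ↦ γ₂`, `Y ↦ γ₃`, `Z ↦ δ`, is the principal ideal
generated by `27Z - 4X³ - Y²`. -/
theorem stmt_19 (σ1 σ2 σ3 δ γ2 γ3 : MvPolynomial (Fin 3) ℤ)
    (h1 : σ1 = X 0 + X 1 + X 2)
    (h2 : σ2 = X 0 * X 1 + X 0 * X 2 + X 1 * X 2)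
    (h3 : σ3 = X 0 * X 1 * X 2)
    (hδ : δ = ∏ ij ∈ (Finset.univ : Finset (Fin 3 × Fin 3)).filter fun ij => ij.1 ≠ ij.2,
        (X ij.1 - X ij.2))
    (hγ2 : γ2 = 3 * σ2 - σ1 ^ 2)
    (hγ3 : γ3 = 27 * σ3 - 9 * σ1 * σ2 + 2 * σ1 ^ 3)
    (A : Subalgebra ℤ (MvPolynomial (Fin 3) ℤ))
    (hA : A = Algebra.adjoin ℤ {d : MvPolynomial (Fin 3) ℤ | ∃ i j : Fin 3, d = X i - X j}) :
    {f : MvPolynomial (Fin 3) ℤ | f ∈ A ∧ ∀ g : Equiv.Perm (Fin 3), rename (⇑g) f = f} =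
        ↑(Algebra.adjoin ℤ {γ2, γ3, δ}) ∧
    RingHom.ker (aeval ![γ2, γ3, δ] :
        MvPolynomial (Fin 3) ℤ →ₐ[ℤ] MvPolynomial (Fin 3) ℤ) =
      Ideal.span {27 * X 2 - 4 * X 0 ^ 3 - X 1 ^ 2} := by
  have hs : (Finset.univ : Finset (Fin 3 × Fin 3)).filter (fun ij => ij.1 ≠ ij.2) =
      {(0, 1), (0, 2), (1, 0), (1, 2), (2, 0), (2, 1)} := by decide
  have dδ : δ = - ((X 0 - X 1) * (X 1 - X 2) * (X 0 - X 2)) ^ 2 := by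
    rw [hδ, hs]
    repeat rw [Finset.prod_insert (by decide)]
    rw [Finset.prod_singleton]; ring
  have f2 : S19.φ S19.g2 = γ2 := by
    rw [hγ2, h2, h1]; simp only [S19.g2, map_neg, map_add, map_mul, map_pow, S19.φ0, S19.φ1]; ring
  have f3 : S19.φ S19.g3 = γ3 := by
    rw [hγ3, h3, h2, h1]
    simp only [S19.g3, map_sub, map_add, map_mul, map_ofNat, S19.φ0, S19.φ1]; ring
  have fδ : S19.φ (- S19.D ^ 2) = δ := by
    rw [dδ]; simp only [S19.D, map_neg, map_add, map_mul, map_pow, S19.φ0, S19.φ1]; ring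
  constructor
  · rw [hA, ← S19.φ_range, ← f2, ← f3, ← fδ]
    exact S19.partA
  · refine S19.partB γ2 γ3 δ (aeval ![Polynomial.X, 0, 0]) ?_ ?_ ?_ ?_
      (aeval fun i => - X i) ?_ ?_ ?_ ?_
    · rw [hγ2, h2, h1]; simp
    · rw [dδ]; simp
    · rw [← fδ]
      have := S19.φ_inj.ne (neg_ne_zero.2 (pow_ne_zero 2 S19.D_ne))
      simpa only [map_zero] using this
    · intro h
      rw [hγ3, h3, h2, h1] at h
      have := congrArg (eval ![1, 0, 0]) h
      simp at this
    · rw [hγ2, h2, h1]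
      simp only [map_sub, map_add, map_mul, map_pow, map_ofNat, aeval_X]; ring
    · rw [hγ3, h3, h2, h1]
      simp only [map_sub, map_add, map_mul, map_pow, map_ofNat, aeval_X]; ring
    · rw [dδ]
      simp only [map_neg, map_sub, map_mul, map_pow, aeval_X]; ring
    · rw [dδ, hγ3, hγ2, h3, h2, h1]; ring
end
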